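/- Let χ be an irreducible character of a finite group G with K = ker(χ). If K = F(G) and F(G) is strictly contained in the solvable radical Sol(G) of G, then there exists an irreducible character ξ of G such that ker(ξ) < K and cod(ξ) > cod(χ). -/

import Mathlib

open CategoryTheory

/-- The kernel of (the character of) a finite-dimensional complex representation. -/
noncomputable def charKer {G : Type} [Group G] (V : FDRep ℂ G) : Subgroup G :=
  MonoidHom.ker (Representation.asGroupHom V.ρ)

/-- The codegree of a character: `|G : ker χ| / χ(1)`. -/
noncomputable def codeg {G : Type} [Group G] (V : FDRep ℂ G) : ℕ :=
  (charKer V).index / Module.finrank ℂ V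

/-- The set of codegrees of irreducible characters of `G`. -/
def codSet (G : Type) [Group G] : Set ℕ :=
  {n | ∃ V : FDRep ℂ G, Simple V ∧ codeg V = n}

/-- Inner product of class functions on a finite group. -/
noncomputable def innerChar (G : Type) [Group G] (f g : G → ℂ) : ℂ :=
  (∑ᶠ x : G, f x * starRingEnd ℂ (g x)) / Nat.card G

open scoped Classical in
/-- The induced character `θ^G` of a character `θ` of a subgroup `H ≤ G`. -/
noncomputable def indChar {G : Type} [Group G] (H : Subgroup G) (θ : FDRep ℂ ↥H) : G → ℂ :=
  fun g => (∑ᶠ x : G, if h : x * g * x⁻¹ ∈ H then θ.character ⟨x * g * x⁻¹, h⟩ else 0) /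
    Nat.card ↥H

open scoped commutatorElement

/-- If `M` is normal, `C ≤ Φ(G)` and the second lower central term of `M` lies in `C`,
then `M` is nilpotent. -/
lemma nilp_of_frattini {G : Type} [Group G] [Finite G] (M C : Subgroup G) [M.Normal] [C.Normal]
    (hC : C ≤ frattini G) (h2 : M.lowerCentralSeries 2 ≤ C) : Group.IsNilpotent M := by
  have q := (Group.isNilpotent_of_finite_tfae (G := M)).out 0 3
  rw [q]; clear q
  intro p hp P
  have hnil : Group.IsNilpotent (M ⧸ C.subgroupOf M) := by
    rw [Subgroup.nilpotent_iff_lowerCentralSeries]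
    refine ⟨2, ?_⟩
    rw [← Subgroup.map_top_of_surjective _ (QuotientGroup.mk'_surjective (C.subgroupOf M)),
      ← Subgroup.map_lowerCentralSeries, Subgroup.map_eq_bot_iff, QuotientGroup.ker_mk',
      ← Subgroup.map_subtype_le_map_subtype, Subgroup.top_subtype_lowerCentralSeries,
      Subgroup.subgroupOf_map_subtype]
    refine le_inf h2 ?_
    exact (Subgroup.lowerCentralSeries_antitone M (Nat.zero_le 2))
  let π := QuotientGroup.mk' (C.subgroupOf M)
  have hπ : Function.Surjective π := QuotientGroup.mk'_surjective _
  let Q : Sylow p (M ⧸ C.subgroupOf M) := P.mapSurjective hπ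
  have hQ : (Q : Subgroup (M ⧸ C.subgroupOf M)).Normal :=
    inferInstance
  have hQ' : ((P : Subgroup M).map π).Normal := by
    have : (Q : Subgroup (M ⧸ C.subgroupOf M)) = (P : Subgroup M).map π :=
      Sylow.coe_mapSurjective hπ P
    rwa [this] at hQ
  have hN : (((P : Subgroup M).map π).comap π).Normal := hQ'.comap π
  have hle : (P : Subgroup M) ≤ ((P : Subgroup M).map π).comap π := Subgroup.le_comap_map _ _
  have h1 := Sylow.normalizer_sup_eq_top' P hle
  rw [Subgroup.comap_map_eq, QuotientGroup.ker_mk', ← sup_assoc] at h1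
  rw [sup_eq_left.2 (show (P : Subgroup M) ≤ Subgroup.normalizer (P : Set M) from
    Subgroup.le_normalizer)] at h1
  have h3 := Sylow.normalizer_sup_eq_top P
  have h4 : M ≤ Subgroup.normalizer ((P : Subgroup M).map M.subtype : Set G) ⊔ C := by
    intro m hm
    have : (⟨m, hm⟩ : M) ∈ Subgroup.normalizer (P : Set M) ⊔ C.subgroupOf M := by
      rw [h1]; trivial
    obtain ⟨n, hn, c, hc, hnc⟩ := Subgroup.mem_sup_of_normal_right.1 this
    have e : m = (n : G) * c := by
      have := congrArg Subtype.val hnc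
      simpa using this.symm
    rw [e]
    refine Subgroup.mul_mem_sup ?_ hc
    exact Subgroup.le_normalizer_map M.subtype (Subgroup.mem_map_of_mem M.subtype hn)
  have h5 : Subgroup.normalizer ((P : Subgroup M).map M.subtype : Set G) ⊔ frattini G = ⊤ := by
    rw [eq_top_iff, ← h3]
    exact sup_le le_sup_left (h4.trans (sup_le_sup_left hC _))
  have h6 := frattini_nongenerating h5
  have h7 : ((P : Subgroup M).map M.subtype).Normal := Subgroup.normalizer_eq_top_iff.mp h6
  exact h7.of_map_subtype

/-- A solvable subgroup covered by its derived subgroup and a normal `F` lies in `F`. -/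
lemma le_of_commutator_sup {G : Type} [Group G] (M F : Subgroup G) [F.Normal]
    (hM : Group.IsSolvable M) (h : M ≤ ⁅M, M⁆ ⊔ F) : M ≤ F := by
  have hs : Group.IsSolvable (M.map (QuotientGroup.mk' F)) :=
    Group.isSolvable_of_surjective (f := (QuotientGroup.mk' F).subgroupMap M)
      ((QuotientGroup.mk' F).subgroupMap_surjective M)
  by_contra hcon
  have hne : Nontrivial (M.map (QuotientGroup.mk' F)) := by
    rw [Subgroup.nontrivial_iff_ne_bot, Ne, Subgroup.map_eq_bot_iff, QuotientGroup.ker_mk']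
    exact hcon
  have hlt := Group.IsSolvable.commutator_lt_top_of_nontrivial (M.map (QuotientGroup.mk' F))
  refine hlt.ne ?_
  apply Subgroup.map_injective (Subgroup.subtype_injective _)
  rw [commutator_def, Subgroup.map_commutator, ← MonoidHom.range_eq_map, Subgroup.range_subtype,
    ← Subgroup.map_commutator]
  refine le_antisymm (Subgroup.map_mono (Subgroup.commutator_le_self M)) ?_
  refine (Subgroup.map_mono h).trans ?_
  rw [Subgroup.map_sup, (Subgroup.map_eq_bot_iff (H := F)).2 (by rw [QuotientGroup.ker_mk'])]
  simp

lemma sup_comm_le {G : Type} [Group G] (A B C D : Subgroup G) [A.Normal] [D.Normal]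
    (h1 : ⁅A, C⁆ ≤ D) (h2 : ⁅B, C⁆ ≤ D) : ⁅A ⊔ B, C⁆ ≤ D := by
  rw [Subgroup.commutator_le]
  intro m hm f hf
  obtain ⟨x, hx, h, hh, rfl⟩ := Subgroup.mem_sup_of_normal_left.1 hm
  have e : ⁅x * h, f⁆ = x * ⁅h, f⁆ * x⁻¹ * ⁅x, f⁆ := by
    simp only [commutatorElement_def]; group
  rw [e]
  exact D.mul_mem (Subgroup.Normal.conj_mem ‹_› _
    (h2 (Subgroup.commutator_mem_commutator hh hf)) x)
    (h1 (Subgroup.commutator_mem_commutator hx hf))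

lemma group_part {G : Type} [Group G] [Finite G] (F S : Subgroup G)
    (hF : IsGreatest {N : Subgroup G | N.Normal ∧ Group.IsNilpotent ↥N} F)
    (hS : S.Normal ∧ Group.IsSolvable S) (hFS : F < S) :
    ∃ H : Subgroup G, F ⊔ H = ⊤ ∧ (F ⊓ H).Normal ∧ ¬ F ≤ H ∧
      ∀ N : Subgroup G, N.Normal → F ⊓ H ≤ N → ¬ F ≤ N → N ⊓ H ≤ F → N ≤ H := by
  obtain ⟨⟨hFn, hFnil⟩, hFmax⟩ := hF
  obtain ⟨hSn, hSs⟩ := hS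
  -- minimal M
  obtain ⟨M, hM⟩ := (Set.toFinite {M : Subgroup G | M.Normal ∧ F < M ∧ M ≤ S}).exists_minimal
    ⟨S, hSn, hFS, le_rfl⟩
  obtain ⟨⟨hMn, hFM, hMS⟩, hMmin⟩ := hM
  have hchief : ∀ X : Subgroup G, X.Normal → F ≤ X → X ≤ M → X = F ∨ X = M := by
    intro X hX h1 h2
    rcases h1.eq_or_lt with h | h
    · exact Or.inl h.symm
    · exact Or.inr (le_antisymm h2 (hMmin ⟨hX, h, h2.trans hMS⟩ h2))
  have hMsol : Group.IsSolvable M :=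
    Group.isSolvable_of_isSolvable_injective (f := Subgroup.inclusion hMS)
      (Subgroup.inclusion_injective hMS)
  have hFsol : Group.IsSolvable F :=
    Group.isSolvable_of_isSolvable_injective (f := Subgroup.inclusion hFS.le)
      (Subgroup.inclusion_injective hFS.le)
  have hMM : ⁅M, M⁆ ≤ F := by
    rcases hchief (⁅M, M⁆ ⊔ F) inferInstance le_sup_right
      (sup_le (Subgroup.commutator_le_self M) hFM.le) with h | h
    · exact le_sup_left.trans h.le
    · exact absurd (le_of_commutator_sup M F hMsol h.ge) hFM.not_ge
  have hMF : ¬ ⁅M, F⁆ ≤ frattini G := by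
    intro hcon
    have : Group.IsNilpotent M := by
      refine nilp_of_frattini M ⁅M, F⁆ hcon ?_
      change ⁅⁅M, M⁆, M⁆ ≤ _
      rw [Subgroup.commutator_comm]
      exact Subgroup.commutator_mono le_rfl hMM
    exact hFM.not_ge (hFmax ⟨hMn, this⟩)
  obtain ⟨H, hH, hMFH⟩ : ∃ H : Subgroup G, IsCoatom H ∧ ¬ ⁅M, F⁆ ≤ H := by
    by_contra! hcon
    refine hMF ?_
    unfold frattini Order.radical
    exact le_iInf₂ fun H hH => hcon H hH
  have hMFF : ⁅M, F⁆ ≤ F := Subgroup.commutator_le_right M F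
  have hFH : ¬ F ≤ H := fun h => hMFH (hMFF.trans h)
  have hcop : ∀ X : Subgroup G, ¬ X ≤ H → X ⊔ H = ⊤ := fun X hX =>
    hH.2 _ (lt_of_le_of_ne le_sup_right (fun h => hX (le_sup_left.trans h.ge)))
  have hFHtop := hcop F hFH
  have hN0 : (F ⊓ H).Normal := by
    have hlt : H.subgroupOf F < ⊤ := by
      rw [lt_top_iff_ne_top, Ne, Subgroup.subgroupOf_eq_top]; exact hFH
    have hnc := Group.normalizerCondition_of_isNilpotent (G := F) _ hlt
    obtain ⟨x, hx, hxn⟩ := SetLike.exists_of_lt hnc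
    rw [← Subgroup.normalizer_eq_top_iff]
    have h1 : H ≤ Subgroup.normalizer ((F ⊓ H : Subgroup G) : Set G) := by
      intro h hh
      rw [Subgroup.mem_normalizer_iff]
      intro y
      simp only [Subgroup.mem_inf]
      constructor
      · rintro ⟨a, b⟩
        exact ⟨hFn.conj_mem _ a _, H.mul_mem (H.mul_mem hh b) (H.inv_mem hh)⟩
      · rintro ⟨a, b⟩
        have a' := hFn.conj_mem _ a h⁻¹
        have b' := H.mul_mem (H.mul_mem (H.inv_mem hh) b) hh
        simp only [mul_assoc, inv_mul_cancel_left, inv_inv, inv_mul_cancel, mul_one] at a' b'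
        exact ⟨a', b'⟩
    have h2 : (x : G) ∈ Subgroup.normalizer ((F ⊓ H : Subgroup G) : Set G) := by
      rw [Subgroup.mem_normalizer_iff] at hx ⊢
      intro y
      constructor
      · rintro ⟨a, b⟩
        exact ⟨hFn.conj_mem _ a _, (hx ⟨y, a⟩).1 b⟩
      · rintro ⟨a, b⟩
        have a' : y ∈ F := by
          have a' := hFn.conj_mem _ a (x : G)⁻¹
          simpa only [mul_assoc, inv_mul_cancel_left, inv_inv, inv_mul_cancel, mul_one] using a'
        exact ⟨a', (hx ⟨y, a'⟩).2 b⟩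
    apply hH.2
    refine lt_of_le_of_ne h1 (fun h => hxn ?_)
    rw [← h] at h2
    exact h2
  -- F / (F ⊓ H) is a chief factor
  have hFchief : ∀ X : Subgroup G, X.Normal → X ≤ F → ¬ X ≤ H → F ≤ X ⊔ (F ⊓ H) := by
    intro X hX hXF hXH f hf
    have : f ∈ X ⊔ H := by rw [hcop X hXH]; trivial
    obtain ⟨x, hx, h, hh, rfl⟩ := Subgroup.mem_sup_of_normal_left.1 this
    refine Subgroup.mul_mem_sup hx ⟨?_, hh⟩
    have := F.mul_mem (F.inv_mem (hXF hx)) hf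
    simpa using this
  have hFF : ⁅F, F⁆ ≤ H := by
    by_contra hcon
    have := hFchief _ inferInstance (Subgroup.commutator_le_self F) hcon
    exact hFH ((le_of_commutator_sup F (F ⊓ H) hFsol this).trans inf_le_right)
  refine ⟨H, hFHtop, hN0, hFH, ?_⟩
  intro N hN hN0N hFN hNH
  by_contra hNnH
  -- N ⊓ F ≤ H
  have hNF : N ⊓ F ≤ H := by
    by_contra hcon
    refine hFN ((hFchief _ inferInstance inf_le_right hcon).trans ?_)
    exact sup_le inf_le_left hN0N
  have hNFc : ⁅N, F⁆ ≤ H := (Subgroup.commutator_le_inf N F).trans hNF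
  have hMN : M ⊓ N ≤ F := by
    rcases hchief ((M ⊓ N) ⊔ F) inferInstance le_sup_right (sup_le inf_le_left hFM.le) with h | h
    · exact le_sup_left.trans h.le
    · refine absurd ?_ hMFH
      refine le_trans ?_ (inf_le_right : F ⊓ H ≤ H)
      rw [← h]
      exact sup_comm_le _ _ _ _
        (le_inf (Subgroup.commutator_le_right _ _)
          ((Subgroup.commutator_mono inf_le_right le_rfl).trans hNFc))
        (le_inf (Subgroup.commutator_le_right _ _) hFF)
  have hMNc : ⁅M, N⁆ ≤ F ⊓ H := by
    have h1 := Subgroup.commutator_le_inf M N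
    have h2 : ⁅M, N⁆ ≤ F := h1.trans hMN
    exact le_inf h2 ((le_inf (h1.trans inf_le_right) h2).trans hNF)
  apply hMFH
  have key : ∀ m ∈ M, m ∈ H → ∀ f ∈ F, ⁅m, f⁆ ∈ F ⊓ H := by
    intro m hm hmH f hf
    have : f ∈ N ⊔ H := by rw [hcop N hNnH]; trivial
    obtain ⟨n, hn, h, hh, rfl⟩ := Subgroup.mem_sup_of_normal_left.1 this
    have e : ⁅m, n * h⁆ = ⁅m, n⁆ * (n * ⁅m, h⁆ * n⁻¹) := by
      simp only [commutatorElement_def]; group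
    have hc : ⁅m, n⁆ ∈ F ⊓ H := hMNc (Subgroup.commutator_mem_commutator hm hn)
    have hF' : ⁅m, n * h⁆ ∈ F := hMFF (Subgroup.commutator_mem_commutator hm hf)
    rw [e] at hF' ⊢
    refine Subgroup.mul_mem _ hc (hN0.conj_mem _ ⟨?_, ?_⟩ n)
    · have h1 := F.mul_mem (F.inv_mem hc.1) hF'
      rw [inv_mul_cancel_left] at h1
      have h2 := hFn.conj_mem _ h1 n⁻¹
      have h3 : ⁅m, h⁆ ∈ F := by
        simpa only [mul_assoc, inv_mul_cancel_left, inv_inv, inv_mul_cancel, mul_one] using h2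
      exact h3
    · exact H.mul_mem (H.mul_mem (H.mul_mem hmH hh) (H.inv_mem hmH)) (H.inv_mem hh)
  have hMle : M ≤ F ⊔ (M ⊓ H) := by
    intro m hm
    have : m ∈ F ⊔ H := by rw [hFHtop]; trivial
    obtain ⟨x, hx, h, hh, rfl⟩ := Subgroup.mem_sup_of_normal_left.1 this
    refine Subgroup.mul_mem_sup hx ⟨?_, hh⟩
    have := M.mul_mem (M.inv_mem (hFM.le hx)) hm
    simpa using this
  refine le_trans ?_ (inf_le_right : F ⊓ H ≤ H)
  refine (Subgroup.commutator_mono hMle le_rfl).trans (sup_comm_le _ _ _ _ ?_ ?_)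
  · exact le_inf (Subgroup.commutator_le_right _ _) hFF
  · rw [Subgroup.commutator_le]
    exact fun m hm f hf => key m hm.1 hm.2 f hf

lemma char_integral {G : Type} [Group G] [Finite G] {V : Type} [AddCommGroup V] [Module ℂ V]
    [FiniteDimensional ℂ V] (ρ : Representation ℂ G V) (g : G) : IsIntegral ℤ (ρ.character g) := by
  unfold Representation.character
  rw [Module.End.trace_eq_sum_roots_charpoly_of_splits (IsAlgClosed.splits _)]
  apply IsIntegral.multiset_sum
  intro μ hμ
  have hroot : (ρ g).charpoly.IsRoot μ := Polynomial.isRoot_of_mem_roots hμ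
  have hev : Module.End.HasEigenvalue (ρ g) μ :=
    Module.End.hasEigenvalue_iff_isRoot_charpoly _ _ |>.2 hroot
  obtain ⟨v, hv⟩ := hev.exists_hasEigenvector
  have h1 := hv.pow_apply (Nat.card G)
  rw [← map_pow, pow_card_eq_one', map_one, Module.End.one_apply] at h1
  have h2 : μ ^ Nat.card G = 1 := by
    have : (μ ^ Nat.card G - 1) • v = 0 := by rw [sub_smul, one_smul, ← h1, sub_self]
    rcases smul_eq_zero.1 this with h | h
    · exact sub_eq_zero.1 h
    · exact absurd h hv.2
  exact IsIntegral.of_pow Nat.card_pos (h2 ▸ isIntegral_one)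

lemma deg_dvd {G : Type} [Group G] [Finite G] {V : Type} [AddCommGroup V] [Module ℂ V]
    [FiniteDimensional ℂ V] (ρ : Representation ℂ G V) (hρ : ρ.IsIrreducible) :
    Module.finrank ℂ V ∣ Nat.card G := by
  classical
  have := Fintype.ofFinite G
  have hcard : (Nat.card G : ℂ) ≠ 0 := by exact_mod_cast Nat.card_pos.ne'
  have : Invertible (Nat.card G : ℂ) := invertibleOfNonzero hcard
  have horth : ∑ g : G, ρ.character g * ρ.character g⁻¹ = Nat.card G := by
    have := Representation.char_orthonormal ρ ρ
    rw [if_pos ⟨Representation.Equiv.refl ρ⟩, inv_mul_eq_one₀ hcard] at this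
    exact this.symm
  have hnt : Nontrivial V := by
    by_contra hcon
    rw [not_nontrivial_iff_subsingleton] at hcon
    have : (⊥ : Subrepresentation ρ) = ⊤ := by
      apply Subrepresentation.toSubmodule_injective
      exact Subsingleton.elim _ _
    exact bot_ne_top this
  let T : Module.End ℂ V := ∑ g : G, ρ.character g⁻¹ • ρ g
  have hcomm : ∀ h : G, T ∘ₗ ρ h = ρ h ∘ₗ T := by
    intro h
    change T * ρ h = ρ h * T
    simp only [T, Finset.sum_mul, Finset.mul_sum, smul_mul_assoc, mul_smul_comm, ← map_mul]
    refine Fintype.sum_equiv (MulAut.conj h⁻¹).toEquiv _ _ (fun g => ?_)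
    have e1 : h * (h⁻¹ * g * h) = g * h := by group
    have e2 : (h⁻¹ * g * h)⁻¹ = h⁻¹ * g⁻¹ * h⁻¹⁻¹ := by group
    simp only [MulEquiv.toEquiv_eq_coe, EquivLike.coe_coe, MulAut.conj_apply, inv_inv]
    rw [e1, e2, Representation.char_conj]
  let T' : Representation.IntertwiningMap ρ ρ := ⟨T, hcomm⟩
  obtain ⟨c, hc⟩ :=
    (Representation.IsIrreducible.algebraMap_intertwiningMap_bijective_of_isAlgClosed
      (ρ := ρ)).2 T'
  have hT : T = algebraMap ℂ (Module.End ℂ V) c := by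
    have := congrArg Representation.IntertwiningMap.toLinearMap hc
    exact this.symm
  have htr : c * Module.finrank ℂ V = Nat.card G := by
    have h1 : LinearMap.trace ℂ V T = Nat.card G := by
      simp only [T, map_sum, map_smul, smul_eq_mul]
      rw [← horth]
      exact Finset.sum_congr rfl fun g _ => mul_comm _ _
    rw [← h1, hT, Algebra.algebraMap_eq_smul_one, map_smul, LinearMap.trace_one, smul_eq_mul]
  -- integrality
  let s : Set ℂ := Set.range ρ.character
  let A : Subalgebra ℤ ℂ := Algebra.adjoin ℤ s
  have hA : Module.Finite ℤ A :=
    Module.Finite.of_fg (fg_adjoin_of_finite (Set.finite_range _) (by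
      rintro _ ⟨g, rfl⟩; exact char_integral ρ g))
  have hfin : Module.Finite ℤ (MonoidAlgebra A G) := Module.Finite.trans A _
  let z : MonoidAlgebra A G :=
    ∑ g : G, MonoidAlgebra.single g ⟨ρ.character g⁻¹, Algebra.subset_adjoin ⟨_, rfl⟩⟩
  have hz : IsIntegral ℤ z := IsIntegral.of_finite ℤ z
  let φ : MonoidAlgebra A G →ₐ[A] Module.End ℂ V := MonoidAlgebra.lift A (Module.End ℂ V) G ρ
  have hφ : φ z = T := by
    simp only [z, T, φ, map_sum, MonoidAlgebra.lift_single]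
    rfl
  have hTint : IsIntegral ℤ T := by
    rw [← hφ]
    exact hz.map (φ.restrictScalars ℤ)
  have hcint : IsIntegral ℤ c := by
    rw [hT] at hTint
    exact (isIntegral_algebraMap_iff (FaithfulSMul.algebraMap_injective ℂ (Module.End ℂ V))).1 hTint
  have hd : (Module.finrank ℂ V : ℂ) ≠ 0 := by exact_mod_cast Module.finrank_pos.ne'
  have hcq : c = algebraMap ℚ ℂ ((Nat.card G : ℚ) / Module.finrank ℂ V) := by
    rw [map_div₀, map_natCast, map_natCast, eq_div_iff hd, htr]
  rw [hcq, isIntegral_algebraMap_iff (algebraMap ℚ ℂ).injective,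
    IsIntegrallyClosed.isIntegral_iff] at hcint
  obtain ⟨y, hy⟩ := hcint
  have hdq : (Module.finrank ℂ V : ℚ) ≠ 0 := by exact_mod_cast Module.finrank_pos.ne'
  rw [eq_div_iff hdq] at hy
  have : y * (Module.finrank ℂ V : ℤ) = Nat.card G := by
    simp only [eq_intCast] at hy
    exact_mod_cast hy
  exact Int.natCast_dvd_natCast.1 ⟨y, by rw [← this, mul_comm]⟩

lemma deg_dvd_index {G : Type} [Group G] [Finite G] {V : Type} [AddCommGroup V] [Module ℂ V]
    [FiniteDimensional ℂ V] (ρ : Representation ℂ G V) (hρ : ρ.IsIrreducible) (N : Subgroup G)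
    [N.Normal] (hN : ∀ n ∈ N, ρ n = 1) : Module.finrank ℂ V ∣ N.index := by
  let σ : Representation ℂ (G ⧸ N) V := QuotientGroup.lift N ρ hN
  have hσ : σ.IsIrreducible := by
    let e : Subrepresentation σ ≃o Subrepresentation ρ :=
      { toFun := fun X => ⟨X.toSubmodule, fun g v hv => X.apply_mem_toSubmodule (g : G ⧸ N) hv⟩
        invFun := fun X => ⟨X.toSubmodule, fun g v hv => by
          induction g using QuotientGroup.induction_on with
          | H g => exact X.apply_mem_toSubmodule g hv⟩
        left_inv := fun X => rfl
        right_inv := fun X => rfl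
        map_rel_iff' := by rfl }
    exact e.isSimpleOrder_iff.2 hρ
  exact deg_dvd σ hσ

lemma simple_of_irr {G : Type} [Group G] [Finite G] {V : Type} [AddCommGroup V] [Module ℂ V]
    [FiniteDimensional ℂ V] (ρ : Representation ℂ G V) (hρ : ρ.IsIrreducible) :
    Simple (FDRep.of ρ) := by
  classical
  have := Fintype.ofFinite G
  have hcard : (Nat.card G : ℂ) ≠ 0 := by exact_mod_cast Nat.card_pos.ne'
  have : Invertible (Nat.card G : ℂ) := invertibleOfNonzero hcard
  rw [FDRep.simple_iff_char_is_norm_one]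
  have := Representation.char_orthonormal ρ ρ
  rw [if_pos ⟨Representation.Equiv.refl ρ⟩, inv_mul_eq_one₀ hcard] at this
  exact this.symm

lemma irr_of_simple {G : Type} [Group G] [Finite G] (V : FDRep ℂ G) (hV : Simple V) :
    Representation.IsIrreducible (V := V) V.ρ := by
  have hnt : Nontrivial V := by
    by_contra hcon
    rw [not_nontrivial_iff_subsingleton] at hcon
    apply id_nonzero V
    ext v
    exact Subsingleton.elim _ _
  refine { exists_pair_ne := ⟨⊥, ⊤, fun h => ?_⟩, eq_bot_or_eq_top := fun X => ?_ }
  · have := congrArg Subrepresentation.toSubmodule h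
    exact bot_ne_top this
  · by_cases hX : X = ⊥
    · exact Or.inl hX
    right
    let f : FDRep.of X.toRepresentation ⟶ V :=
      ⟨FGModuleCat.ofHom X.toSubmodule.subtype, fun g => by ext v; rfl⟩
    have hmono : Mono f := by
      apply ConcreteCategory.mono_of_injective
      exact Subtype.val_injective
    have hne : f ≠ 0 := by
      intro h0
      apply hX
      apply Subrepresentation.toSubmodule_injective
      refine (Submodule.eq_bot_iff _).2 fun x hx => ?_
      exact congrArg (fun k : FDRep.of X.toRepresentation ⟶ V => k.hom.hom.hom ⟨x, hx⟩) h0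
    have hiso : IsIso f := (Simple.mono_isIso_iff_nonzero f).2 hne
    apply Subrepresentation.toSubmodule_injective
    refine Submodule.eq_top_iff'.2 fun v => ?_
    have h1 : inv f ≫ f = 𝟙 V := IsIso.inv_hom_id f
    have h2 : f.hom.hom.hom ((inv f).hom.hom.hom v) = v :=
      congrArg (fun k : V ⟶ V => k.hom.hom.hom v) h1
    rw [← h2]
    exact ((inv f).hom.hom.hom v : X.toSubmodule).2

/-- Representation of `G` on functions `G ⧸ H → V`, i.e. `V ⊗ ℂ[G/H]`. -/
def funRep {G : Type} [Group G] {V : Type} [AddCommGroup V] [Module ℂ V]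
    (ρ : Representation ℂ G V) (H : Subgroup G) : Representation ℂ G (G ⧸ H → V) where
  toFun g :=
    { toFun := fun f x => ρ g (f (g⁻¹ • x))
      map_add' := fun f f' => by ext x; simp
      map_smul' := fun c f => by ext x; simp }
  map_one' := by ext; simp
  map_mul' a b := by
    refine LinearMap.ext fun f => funext fun x => ?_
    simp [mul_smul]

lemma funRep_apply {G : Type} [Group G] {V : Type} [AddCommGroup V] [Module ℂ V]
    (ρ : Representation ℂ G V) (H : Subgroup G) (g : G) (f : G ⧸ H → V) (x : G ⧸ H) :
    funRep ρ H g f x = ρ g (f (g⁻¹ • x)) := rfl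

/-- Every nonzero subrepresentation contains an irreducible one. -/
lemma exists_irr {G : Type} [Group G] {V : Type} [AddCommGroup V] [Module ℂ V]
    [FiniteDimensional ℂ V] (ρ : Representation ℂ G V) (U : Subrepresentation ρ) (hU : U ≠ ⊥) :
    ∃ X : Subrepresentation ρ, X ≤ U ∧ X ≠ ⊥ ∧ X.toRepresentation.IsIrreducible := by
  obtain ⟨X, ⟨hXU, hX⟩, hmin⟩ := exists_minimalFor_of_wellFoundedLT
    (fun X : Subrepresentation ρ => X ≤ U ∧ X ≠ ⊥)
    (fun X => Module.finrank ℂ X.toSubmodule) ⟨U, le_rfl, hU⟩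
  refine ⟨X, hXU, hX, ?_⟩
  refine { exists_pair_ne := ⟨⊥, ⊤, fun h => hX ?_⟩, eq_bot_or_eq_top := fun Y => ?_ }
  · have h1 := congrArg Subrepresentation.toSubmodule h
    apply Subrepresentation.toSubmodule_injective
    refine (Submodule.eq_bot_iff _).2 fun x hx => ?_
    have : (⟨x, hx⟩ : X.toSubmodule) ∈ (⊥ : Submodule ℂ X.toSubmodule) := by
      change _ ∈ (⊥ : Subrepresentation X.toRepresentation).toSubmodule
      rw [h1]; exact Submodule.mem_top
    simpa using this
  · by_cases hY : Y = ⊥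
    · exact Or.inl hY
    right
    let Y' : Subrepresentation ρ := ⟨Y.toSubmodule.map X.toSubmodule.subtype, by
      rintro g _ ⟨y, hy, rfl⟩
      exact ⟨X.toRepresentation g y, Y.apply_mem_toSubmodule g hy, rfl⟩⟩
    have hY'X : Y'.toSubmodule ≤ X.toSubmodule := Submodule.map_subtype_le _ _
    have hY' : Y' ≠ ⊥ := by
      intro h
      apply hY
      apply Subrepresentation.toSubmodule_injective
      have h1 : Y.toSubmodule.map X.toSubmodule.subtype = ⊥ :=
        congrArg Subrepresentation.toSubmodule h
      exact Submodule.map_injective_of_injective X.toSubmodule.injective_subtype (by rw [h1]; exact (Submodule.map_bot _).symm)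
    have hle := hmin (j := Y') ⟨le_trans hY'X hXU, hY'⟩ (Submodule.finrank_mono hY'X)
    have heq : Y'.toSubmodule = X.toSubmodule := Submodule.eq_of_le_of_finrank_le hY'X hle
    apply Subrepresentation.toSubmodule_injective
    refine Submodule.eq_top_iff'.2 fun x => ?_
    have : (x : V) ∈ Y'.toSubmodule := by rw [heq]; exact x.2
    obtain ⟨y, hy, hyx⟩ := this
    have : y = x := Subtype.ext hyx
    exact this ▸ hy

lemma rep_part {G : Type} [Group G] [Finite G] {V : Type} [AddCommGroup V] [Module ℂ V]
    [FiniteDimensional ℂ V] (ρ : Representation ℂ G V) (hρ : ρ.IsIrreducible)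
    (F H : Subgroup G) [F.Normal] (hF : ∀ f ∈ F, ρ f = 1) (hFH : F ⊔ H = ⊤)
    (hN0 : (F ⊓ H).Normal) (hnle : ¬ F ≤ H) :
    ∃ X : Subrepresentation (funRep ρ H), X.toRepresentation.IsIrreducible ∧
      Module.finrank ℂ X.toSubmodule < H.index * Module.finrank ℂ V ∧
      (∀ g ∈ F ⊓ H, X.toRepresentation g = 1) ∧
      (∃ f ∈ F, X.toRepresentation f ≠ 1) ∧
      (∀ h ∈ H, X.toRepresentation h = 1 → ρ h = 1) := by
  classical
  have := Fintype.ofFinite (G ⧸ H)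
  have hnt : Nontrivial V := by
    by_contra hcon
    rw [not_nontrivial_iff_subsingleton] at hcon
    have : (⊥ : Subrepresentation ρ) = ⊤ := by
      apply Subrepresentation.toSubmodule_injective
      exact Subsingleton.elim _ _
    exact bot_ne_top this
  obtain ⟨v, hv⟩ := exists_ne (0 : V)
  have htrans : ∀ x : G ⧸ H, ∃ f ∈ F, x = f • ((1 : G) : G ⧸ H) := by
    intro x
    induction x using QuotientGroup.induction_on with
    | H g =>
      have : g ∈ F ⊔ H := by rw [hFH]; trivial
      obtain ⟨f, hf, h, hh, rfl⟩ := Subgroup.mem_sup_of_normal_left.1 this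
      refine ⟨f, hf, ?_⟩
      rw [MulAction.Quotient.smul_mk, QuotientGroup.eq]
      simpa using hh
  let U : Subrepresentation (funRep ρ H) :=
    ⟨LinearMap.ker (∑ x : G ⧸ H, LinearMap.proj (R := ℂ) (φ := fun _ => V) x), by
      intro g f hf
      rw [LinearMap.mem_ker, LinearMap.sum_apply] at hf ⊢
      simp only [LinearMap.proj_apply, funRep_apply] at hf ⊢
      rw [← map_sum, ← (ρ g).map_zero, ← hf]
      congr 1
      exact Fintype.sum_equiv (MulAction.toPerm g⁻¹) _ _ (fun x => rfl)⟩
  have hUmem : ∀ f : G ⧸ H → V, f ∈ U.toSubmodule ↔ ∑ x, f x = 0 := by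
    intro f
    change f ∈ LinearMap.ker _ ↔ _
    rw [LinearMap.mem_ker, LinearMap.sum_apply]
    rfl
  have hUbot : U ≠ ⊥ := by
    intro h
    obtain ⟨f, hf, hfH⟩ := SetLike.not_le_iff_exists.1 hnle
    have hne : ((f : G) : G ⧸ H) ≠ ((1 : G) : G ⧸ H) := by
      rw [Ne, QuotientGroup.eq]
      simpa using hfH
    let φ : G ⧸ H → V := Pi.single (f : G ⧸ H) v - Pi.single ((1 : G) : G ⧸ H) v
    have h1 : φ ∈ U.toSubmodule := by
      rw [hUmem]
      simp [φ, Finset.sum_sub_distrib]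
    rw [h] at h1
    have h2 : φ = 0 := h1
    have h3 := congrFun h2 (f : G ⧸ H)
    simp only [φ, Pi.sub_apply, Pi.single_eq_same, Pi.single_eq_of_ne hne, sub_zero,
      Pi.zero_apply] at h3
    exact hv h3
  have hUtop : U.toSubmodule < ⊤ := by
    rw [lt_top_iff_ne_top]
    intro h
    have h1 : (Pi.single ((1 : G) : G ⧸ H) v : G ⧸ H → V) ∈ U.toSubmodule := by
      rw [h]; exact Submodule.mem_top
    rw [hUmem] at h1
    simp at h1
    exact hv h1
  obtain ⟨X, hXU, hXbot, hXirr⟩ := exists_irr _ U hUbot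
  have hXne : ∃ f ∈ X.toSubmodule, f ≠ 0 := by
    by_contra! hcon
    apply hXbot
    apply Subrepresentation.toSubmodule_injective
    exact (Submodule.eq_bot_iff _).2 hcon
  have hone : ∀ g, X.toRepresentation g = 1 → ∀ φ ∈ X.toSubmodule, funRep ρ H g φ = φ := by
    intro g hg φ hφ
    have := congrArg (fun T : Module.End ℂ X.toSubmodule => (T ⟨φ, hφ⟩ : G ⧸ H → V)) hg
    exact this
  refine ⟨X, hXirr, ?_, ?_, ?_, ?_⟩
  · calc Module.finrank ℂ X.toSubmodule ≤ Module.finrank ℂ U.toSubmodule :=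
          Submodule.finrank_mono hXU
      _ < Module.finrank ℂ (G ⧸ H → V) := Submodule.finrank_lt hUtop.ne
      _ = _ := by
        rw [Module.finrank_pi_fintype]
        simp [Subgroup.index, Nat.card_eq_fintype_card]
  · intro g hg
    refine LinearMap.ext fun φ => Subtype.ext (funext fun x => ?_)
    change ρ g ((φ : G ⧸ H → V) (g⁻¹ • x)) = (φ : G ⧸ H → V) x
    rw [hF g hg.1]
    have : g⁻¹ • x = x := by
      induction x using QuotientGroup.induction_on with
      | H y =>
        rw [MulAction.Quotient.smul_mk, QuotientGroup.eq]
        have h2 := hN0.conj_mem _ hg y⁻¹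
        simpa [mul_assoc] using h2.2
    rw [this]; rfl
  · by_contra! hcon
    obtain ⟨φ, hφ, hφ0⟩ := hXne
    have hconst : ∀ x, φ x = φ ((1 : G) : G ⧸ H) := by
      intro x
      obtain ⟨f, hf, rfl⟩ := htrans x
      have h1 := congrFun (hone f (hcon f hf) φ hφ) (f • ((1 : G) : G ⧸ H))
      rw [funRep_apply, inv_smul_smul, hF f hf] at h1
      exact h1.symm
    have h1 := (hUmem φ).1 (hXU hφ)
    simp only [hconst, Finset.sum_const, Finset.card_univ] at h1
    have h2 : φ ((1 : G) : G ⧸ H) = 0 := by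
      rw [← Nat.cast_smul_eq_nsmul ℂ, smul_eq_zero] at h1
      refine h1.resolve_left ?_
      exact_mod_cast Fintype.card_ne_zero
    exact hφ0 (funext fun x => by rw [hconst, h2]; rfl)
  · intro h hh hX1
    let E : Subrepresentation ρ :=
      ⟨X.toSubmodule.map (LinearMap.proj (R := ℂ) (φ := fun _ => V) ((1 : G) : G ⧸ H)), by
        rintro g _ ⟨φ, hφ, rfl⟩
        have : g ∈ F ⊔ H := by rw [hFH]; trivial
        obtain ⟨f, hf, k, hk, rfl⟩ := Subgroup.mem_sup_of_normal_left.1 this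
        refine ⟨funRep ρ H k φ, X.apply_mem_toSubmodule k hφ, ?_⟩
        rw [map_mul, hF f hf, one_mul]
        change ρ k (φ (k⁻¹ • ((1 : G) : G ⧸ H))) = ρ k (φ ((1 : G) : G ⧸ H))
        have : k⁻¹ • ((1 : G) : G ⧸ H) = ((1 : G) : G ⧸ H) := by
          rw [MulAction.Quotient.smul_mk, QuotientGroup.eq]
          simpa using hk
        rw [this]⟩
    have hE : E = ⊤ := by
      refine (hρ.eq_bot_or_eq_top E).resolve_left fun hbot => ?_
      obtain ⟨φ, hφ, hφ0⟩ := hXne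
      apply hφ0
      have hz : ∀ ψ ∈ X.toSubmodule, ψ ((1 : G) : G ⧸ H) = 0 := by
        intro ψ hψ
        have : ψ ((1 : G) : G ⧸ H) ∈ E.toSubmodule := ⟨ψ, hψ, rfl⟩
        rw [hbot] at this
        exact this
      funext x
      obtain ⟨f, hf, rfl⟩ := htrans x
      have h1 := hz _ (X.apply_mem_toSubmodule f⁻¹ hφ)
      rw [funRep_apply, inv_inv, hF _ (F.inv_mem hf)] at h1
      exact h1
    refine LinearMap.ext fun w => ?_
    have : w ∈ E.toSubmodule := by rw [hE]; exact Submodule.mem_top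
    obtain ⟨φ, hφ, rfl⟩ := this
    have h1 := congrFun (hone h hX1 φ hφ) ((1 : G) : G ⧸ H)
    rw [funRep_apply] at h1
    have : h⁻¹ • ((1 : G) : G ⧸ H) = ((1 : G) : G ⧸ H) := by
      rw [MulAction.Quotient.smul_mk, QuotientGroup.eq]
      simpa using hh
    rw [this] at h1
    exact h1

lemma mem_charKer {G : Type} [Group G] (V : FDRep ℂ G) (g : G) :
    g ∈ charKer V ↔ V.ρ g = 1 := by
  unfold charKer
  rw [MonoidHom.mem_ker, Units.ext_iff, Representation.asGroupHom_apply]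
  rfl

theorem stmt_7 {G : Type} [Group G] [Finite G] (χ : FDRep ℂ G) (hχ : Simple χ)
    (F S : Subgroup G)
    (hF : IsGreatest {N : Subgroup G | N.Normal ∧ Group.IsNilpotent ↥N} F)
    (hS : IsGreatest {N : Subgroup G | N.Normal ∧ IsSolvable ↥N} S)
    (hK : charKer χ = F) (hFS : F < S) :
    ∃ ξ : FDRep ℂ G, Simple ξ ∧ charKer ξ < charKer χ ∧ codeg χ < codeg ξ := by
  obtain ⟨hFn, -⟩ := hF.1
  obtain ⟨H, hFH, hN0, hnle, hker⟩ := group_part F S hF hS.1 hFS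
  have hirr := irr_of_simple χ hχ
  have hFker : ∀ f ∈ F, χ.ρ f = 1 := fun f hf => (mem_charKer χ f).1 (hK ▸ hf)
  obtain ⟨X, hXirr, hdim, hX0, ⟨f, hf, hfX⟩, hXH⟩ := rep_part (V := χ) χ.ρ hirr F H hFker hFH hN0 hnle
  let ξ : FDRep ℂ G := FDRep.of X.toRepresentation
  have hmem : ∀ g, g ∈ charKer ξ ↔ X.toRepresentation g = 1 := fun g => mem_charKer ξ g
  have hNn : (charKer ξ).Normal := MonoidHom.normal_ker _
  have hge : F ⊓ H ≤ charKer ξ := fun g hg => (hmem g).2 (hX0 g hg)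
  have hFnot : ¬ F ≤ charKer ξ := fun h => hfX ((hmem f).1 (h hf))
  have hinf : charKer ξ ⊓ H ≤ F := by
    rintro g ⟨hg, hgH⟩
    rw [← hK]
    exact (mem_charKer χ g).2 (hXH g hgH ((hmem g).1 hg))
  have hNH := hker _ hNn hge hFnot hinf
  have hkereq : charKer ξ = F ⊓ H :=
    le_antisymm (le_inf ((le_inf le_rfl hNH).trans hinf) hNH) hge
  refine ⟨ξ, simple_of_irr _ hXirr, ?_, ?_⟩
  · rw [hkereq, hK]
    exact lt_of_le_of_ne inf_le_left fun h => hnle (inf_eq_left.1 h)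
  · have hidx : (charKer ξ).index = H.index * F.index := by
      have h1 : F.index = F.relIndex H := by
        rw [← Subgroup.relIndex_sup_left, hFH, Subgroup.relIndex_top_right]
      rw [hkereq, ← Subgroup.relIndex_mul_index (inf_le_right : F ⊓ H ≤ H),
        Subgroup.inf_relIndex_right, ← h1, mul_comm]
    have hdvd : Module.finrank ℂ X.toSubmodule ∣ (charKer ξ).index :=
      deg_dvd_index _ hXirr (charKer ξ) (fun n hn => (hmem n).1 hn)
    have hHpos : 0 < H.index := Nat.pos_of_ne_zero Subgroup.index_ne_zero_of_finite
    have hFpos : 0 < F.index := Nat.pos_of_ne_zero Subgroup.index_ne_zero_of_finite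
    unfold codeg
    change (charKer χ).index / Module.finrank ℂ χ
      < (charKer ξ).index / Module.finrank ℂ X.toSubmodule
    rw [hK]
    obtain ⟨c, hc⟩ := hdvd
    have hpos : 0 < Module.finrank ℂ X.toSubmodule := by
      rcases Nat.eq_zero_or_pos (Module.finrank ℂ X.toSubmodule) with h | h
      · rw [h, zero_mul, hidx] at hc
        exact absurd hc (Nat.mul_pos hHpos hFpos).ne'
      · exact h
    rw [hc, Nat.mul_div_cancel_left _ hpos]
    have hd : 0 < Module.finrank ℂ χ := by
      rcases Nat.eq_zero_or_pos (Module.finrank ℂ χ) with h | h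
      · rw [h] at hdim; simp at hdim
      · exact h
    rw [Nat.div_lt_iff_lt_mul hd]
    rw [hidx] at hc
    have hcpos : 0 < c := by
      rcases Nat.eq_zero_or_pos c with h | h
      · rw [h, mul_zero] at hc
        exact absurd hc (Nat.mul_pos hHpos hFpos).ne'
      · exact h
    refine lt_of_mul_lt_mul_left (a := H.index) ?_ (Nat.zero_le _)
    calc H.index * F.index = Module.finrank ℂ X.toSubmodule * c := hc
      _ < H.index * Module.finrank ℂ χ * c := Nat.mul_lt_mul_of_pos_right hdim hcpos
      _ = H.index * (c * Module.finrank ℂ χ) := by ring
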